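/- Let G be a connected graph with σ_2 ≥ t_{k+1} − k + 1 for some positive integer k. Then t_k ≥ t_{k+1}. (Corollary 6) -/

import Mathlib

open SimpleGraph

variable {V : Type*}

/-- A set of vertices is independent in `G`. -/
def IsIndSet (G : SimpleGraph V) (s : Set V) : Prop :=
  ∀ ⦃u⦄, u ∈ s → ∀ ⦃v⦄, v ∈ s → ¬ G.Adj u v

/-- The number of end-vertices (vertices of degree one) of a subgraph `H`. -/
noncomputable def endVertexCount {G : SimpleGraph V} (H : G.Subgraph) : ℕ :=
  {v : V | v ∈ H.verts ∧ (H.neighborSet v).ncard = 1}.ncard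

/-- `H` is a cycle; a single vertex and a single edge are regarded as
simple cycles of orders 1 and 2, respectively. -/
def IsCycleSubgraph {G : SimpleGraph V} (H : G.Subgraph) : Prop :=
  H.Connected ∧ (H.verts.ncard ≤ 2 ∨ ∀ v ∈ H.verts, (H.neighborSet v).ncard = 2)

/-- `H` is a `k`-ended tree in `G`: a tree with at most `k` end-vertices (leaves);
a cycle is regarded as a 1-ended tree. -/
def IsKEndedTree (G : SimpleGraph V) (k : ℕ) (H : G.Subgraph) : Prop :=
  (H.coe.IsTree ∧ endVertexCount H ≤ k) ∨ (1 ≤ k ∧ IsCycleSubgraph H)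

/-- `t k`: the order of a largest `k`-ended tree in `G`. -/
noncomputable def maxKEndedOrder (G : SimpleGraph V) (k : ℕ) : ℕ :=
  sSup {n | ∃ H : G.Subgraph, IsKEndedTree G k H ∧ H.verts.ncard = n}

/-- `σ m`: the minimum degree sum over independent sets of `m` vertices of `G`,
and `+∞` if the independence number of `G` is less than `m`. -/
noncomputable def minDegreeSum (G : SimpleGraph V) [Fintype V] [DecidableRel G.Adj]
    (m : ℕ) : ℕ∞ :=
  ⨅ s ∈ {s : Finset V | s.card = m ∧ IsIndSet G ↑s}, (∑ v ∈ s, G.degree v : ℕ∞)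

/-!
Suppose `t_k < t_{k+1}` and let `T` be a largest `(k+1)`-ended tree. It has exactly `k + 1`
end-vertices, and its vertex set `S` carries no `k`-ended tree spanning `S`. Two end-vertices of `T`
are never adjacent in `G`: the new edge closes a path of `T` to a cycle, and either that cycle spans
`S`, or it meets a branch vertex of `T`, where deleting a cycle edge saves an end-vertex.

Fix end-vertices `u ≠ v` and root `T` at `u`. For a neighbour `x` of `u` with parent `x⁻ ≠ u`, the
exchange `T + ux - xx⁻` turns the end-vertex `u` into an inner vertex, so `x⁻` must become an
end-vertex: it has degree two in `T`, and it is not adjacent to `v`, which is still an end-vertex.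
Hence `x ↦ x⁻` is injective on `N(u)`, and its image and `N(v)` are disjoint sets avoiding the `k`
end-vertices other than `u`. By maximality `T` contains all neighbours of `u` and `v`, so
`deg u + deg v ≤ t_{k+1} - k`, against the hypothesis on `σ_2`.
-/

variable {W : Type*} {T Γ : SimpleGraph V} {u v x y : V} {k : ℕ}

/-- The end-vertices (vertices of degree one) of a graph, the counterpart of `endVertexCount` for
graphs that are not presented as subgraphs. -/
def endVertexSet (T : SimpleGraph V) : Set V := {v | (T.neighborSet v).ncard = 1}

lemma mem_endVertexSet : v ∈ endVertexSet T ↔ (T.neighborSet v).ncard = 1 := Iff.rfl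

/-- Cycles, including the one- and two-vertex ones: the counterpart of `IsCycleSubgraph` for graphs
that are not presented as subgraphs. -/
def IsCycleGraph (T : SimpleGraph V) : Prop :=
  T.Connected ∧ (Nat.card V ≤ 2 ∨ ∀ v, (T.neighborSet v).ncard = 2)

/-- The counterpart of `IsKEndedTree` for graphs that are not presented as subgraphs, so that all
exchange arguments take place on a fixed vertex set. -/
def IsKEnded (T : SimpleGraph V) (k : ℕ) : Prop :=
  (T.IsTree ∧ (endVertexSet T).ncard ≤ k) ∨ (1 ≤ k ∧ IsCycleGraph T)

/-- `Γ` has a spanning `k`-ended tree, a spanning cycle counting as 1-ended. -/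
def HasKEndedFactor (Γ : SimpleGraph V) (k : ℕ) : Prop := ∃ T ≤ Γ, IsKEnded T k

section Connectivity

lemma mem_of_connected_of_adj_closed (hT : T.Connected) {s : Set V} (hu : u ∈ s)
    (hs : ∀ a ∈ s, ∀ b, T.Adj a b → b ∈ s) (z : V) : z ∈ s := by
  obtain ⟨p⟩ := hT.preconnected u z
  induction p with
  | nil => exact hu
  | cons h _ ih => exact ih (hs _ hu _ h)

lemma card_le_two_of_adj_endVertices (hT : T.Connected) (hu : u ∈ endVertexSet T)
    (hv : v ∈ endVertexSet T) (huv : T.Adj u v) : Nat.card V ≤ 2 := by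
  obtain ⟨a, ha⟩ := Set.ncard_eq_one.1 hu
  obtain ⟨b, hb⟩ := Set.ncard_eq_one.1 hv
  have hpair : ∀ z, z ∈ ({u, v} : Set V) := by
    refine mem_of_connected_of_adj_closed hT (Set.mem_insert u {v}) ?_
    simp only [Set.ext_iff, mem_neighborSet, Set.mem_singleton_iff] at ha hb
    grind [huv.symm]
  rw [← Set.ncard_univ, ← Set.ncard_pair huv.ne]
  exact Set.ncard_le_ncard (fun z _ ↦ hpair z) (Set.toFinite _)

lemma ncard_neighborSet_eq_two_of_isCycle [Finite V] (hT : T.Connected) {c : T.Walk u u}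
    (hc : c.IsCycle) (hdeg : ∀ z ∈ c.support, (T.neighborSet z).ncard ≤ 2) (z : V) :
    (T.neighborSet z).ncard = 2 := by
  have hnbr : ∀ a ∈ c.support, c.toSubgraph.neighborSet a = T.neighborSet a := fun a ha ↦
    Set.eq_of_subset_of_ncard_le (c.toSubgraph.neighborSet_subset a)
      ((hdeg a ha).trans_eq (hc.ncard_neighborSet_toSubgraph_eq_two ha).symm) (Set.toFinite _)
  have hspan : z ∈ c.support := by
    refine mem_of_connected_of_adj_closed hT (s := {z | z ∈ c.support}) c.start_mem_support
      (fun a ha b hab ↦ ?_) z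
    have hb : b ∈ c.toSubgraph.neighborSet a := (hnbr a ha).symm ▸ hab
    exact c.mem_verts_toSubgraph.1 (c.toSubgraph.edge_vert hb.symm)
  rw [← hnbr z hspan, hc.ncard_neighborSet_toSubgraph_eq_two hspan]

end Connectivity

section Exchange

open Classical in
lemma ncard_neighborSet_sup_edge [Finite V] (huv : u ≠ v) (hadj : ¬ T.Adj u v) (z : V) :
    ((T ⊔ edge u v).neighborSet z).ncard =
      (T.neighborSet z).ncard + if z = u ∨ z = v then 1 else 0 := by
  split_ifs with hz
  · obtain ⟨w, hw, hset⟩ : ∃ w, ¬ T.Adj z w ∧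
        (T ⊔ edge u v).neighborSet z = insert w (T.neighborSet z) := by
      refine ⟨if z = u then v else u, by grind [T.adj_comm u v], ?_⟩
      ext w
      simp only [mem_neighborSet, sup_adj, edge_adj, Set.mem_insert_iff]
      grind
    rw [hset, Set.ncard_insert_of_notMem (by exact hw)]
  · congr 1
    ext w
    simp only [mem_neighborSet, sup_adj, edge_adj]
    grind

open Classical in
lemma ncard_neighborSet_deleteEdges_singleton [Finite V] (hxy : T.Adj x y) (z : V) :
    ((T.deleteEdges {s(x, y)}).neighborSet z).ncard + (if z = x ∨ z = y then 1 else 0) =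
      (T.neighborSet z).ncard := by
  split_ifs with hz
  · obtain ⟨w, hw, hset⟩ : ∃ w, T.Adj z w ∧
        (T.deleteEdges {s(x, y)}).neighborSet z = T.neighborSet z \ {w} := by
      refine ⟨if z = x then y else x, by grind [T.adj_comm x y], ?_⟩
      ext w
      simp only [mem_neighborSet, deleteEdges_adj, Set.mem_sdiff, Set.mem_singleton_iff,
        Sym2.eq_iff]
      grind
    rw [hset, Set.ncard_sdiff_singleton_add_one (by exact hw)]
  · rw [add_zero]
    congr 1
    ext w
    simp only [mem_neighborSet, deleteEdges_adj, Set.mem_singleton_iff, Sym2.eq_iff]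
    grind

lemma exists_isCycle_sup_edge (huv : u ≠ v) (hadj : ¬ T.Adj u v) {p : T.Walk u v}
    (hp : p.IsPath) : ∃ c : (T ⊔ edge u v).Walk v v,
      c.IsCycle ∧ p.edges ⊆ c.edges ∧ c.support ⊆ p.support := by
  have hvu : (T ⊔ edge u v).Adj v u := by simp [edge_adj, huv.symm]
  refine ⟨Walk.cons hvu (p.mapLe le_sup_left), Walk.cons_isCycle_iff _ _ |>.2 ⟨by simpa, ?_⟩,
    by simp, by simp⟩
  rw [Walk.edges_mapLe_eq_edges]
  exact fun h ↦ hadj (p.adj_of_mem_edges h).symm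

/-- The edge exchange `T + uv - xy`. -/
def exchange (T : SimpleGraph V) (u v x y : V) : SimpleGraph V :=
  (T ⊔ edge u v).deleteEdges {s(x, y)}

lemma exchange_le (hT : T ≤ Γ) (huv : Γ.Adj u v) : exchange T u v x y ≤ Γ :=
  (deleteEdges_le _).trans (sup_le hT ((edge_le_iff Γ).2 (.inr huv)))

open Classical in
lemma ncard_neighborSet_exchange [Finite V] (huv : u ≠ v) (hadj : ¬ T.Adj u v)
    (hxy : T.Adj x y) (z : V) :
    ((exchange T u v x y).neighborSet z).ncard + (if z = x ∨ z = y then 1 else 0) =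
      (T.neighborSet z).ncard + if z = u ∨ z = v then 1 else 0 := by
  rw [← ncard_neighborSet_sup_edge huv hadj z]
  exact ncard_neighborSet_deleteEdges_singleton (le_sup_left (a := T) hxy) z

lemma isTree_exchange [Finite V] (hT : T.IsTree) (huv : u ≠ v) (hadj : ¬ T.Adj u v)
    {p : T.Walk u v} (hp : p.IsPath) (hxy : s(x, y) ∈ p.edges) :
    (exchange T u v x y).IsTree := by
  obtain ⟨hconn, hcard⟩ := isTree_iff_connected_and_card.1 hT
  have hmem : s(x, y) ∈ (T ⊔ edge u v).edgeSet := .inl (p.adj_of_mem_edges hxy)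
  have hedges : (T ⊔ edge u v).edgeSet = insert s(u, v) T.edgeSet := by
    rw [edgeSet_sup, edgeSet_edge_of_ne huv, Set.union_singleton]
  refine isTree_iff_connected_and_card.2 ⟨?_, ?_⟩
  · obtain ⟨c, hc, hpc, -⟩ := exists_isCycle_sup_edge huv hadj hp
    refine (hconn.mono le_sup_left).connected_delete_edge_of_not_isBridge fun hbridge ↦ ?_
    exact (isBridge_iff_forall_cycle_notMem hmem).1 hbridge c hc (hpc hxy)
  · rw [Nat.card_coe_set_eq] at hcard ⊢
    rw [exchange, edgeSet_deleteEdges, Set.ncard_sdiff_singleton_of_mem hmem, hedges,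
      Set.ncard_insert_of_notMem (by simpa using hadj)]
    exact hcard

lemma ncard_endVertexSet_exchange_lt [Finite V] (hu : u ∈ endVertexSet T)
    (hv : v ∈ endVertexSet T) (huv : u ≠ v) (hadj : ¬ T.Adj u v) (hxy : T.Adj x y)
    (hx : 3 ≤ (T.neighborSet x).ncard) :
    (endVertexSet (exchange T u v x y)).ncard < (endVertexSet T).ncard := by
  have hsub : endVertexSet (exchange T u v x y) ⊆ insert y (endVertexSet T \ {u, v}) := by
    intro z hz
    have hdeg := ncard_neighborSet_exchange huv hadj hxy z
    simp only [mem_endVertexSet, Set.mem_insert_iff, Set.mem_sdiff,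
      Set.mem_singleton_iff] at *
    grind
  have hcard := Set.ncard_sdiff_add_ncard_of_subset (Set.pair_subset hu hv)
  rw [Set.ncard_pair huv] at hcard
  have := (Set.ncard_le_ncard hsub).trans (Set.ncard_insert_le _ _)
  omega

lemma hasKEndedFactor_of_adj_endVertices [Finite V] (hT : T.IsTree) (hle : T ≤ Γ)
    (hk : (endVertexSet T).ncard ≤ k + 1) (hu : u ∈ endVertexSet T) (hv : v ∈ endVertexSet T)
    (huv : Γ.Adj u v) : HasKEndedFactor Γ k := by
  have hk1 : 1 ≤ k := by
    have := (Set.one_lt_ncard).2 ⟨u, hu, v, hv, huv.ne⟩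
    omega
  by_cases hadj : T.Adj u v
  · exact ⟨T, hle, .inr ⟨hk1, hT.connected,
      .inl (card_le_two_of_adj_endVertices hT.connected hu hv hadj)⟩⟩
  obtain ⟨p, hp⟩ := hT.connected.exists_isPath u v
  by_cases hbranch : ∃ b ∈ p.support, 3 ≤ (T.neighborSet b).ncard
  · obtain ⟨b, hb, hb3⟩ := hbranch
    have hbv : b ≠ v := by rintro rfl; rw [hv] at hb3; omega
    obtain ⟨e, he, y, rfl⟩ := (Walk.mem_support_iff_exists_mem_edges.1 hb).resolve_left hbv
    have hlt := ncard_endVertexSet_exchange_lt hu hv huv.ne hadj (p.adj_of_mem_edges he) hb3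
    exact ⟨_, exchange_le hle huv, .inl ⟨isTree_exchange hT huv.ne hadj hp he, by omega⟩⟩
  · have hconn : (T ⊔ edge u v).Connected := hT.connected.mono le_sup_left
    obtain ⟨c, hc, -, hcp⟩ := exists_isCycle_sup_edge huv.ne hadj hp
    refine ⟨T ⊔ edge u v, sup_le hle ((edge_le_iff Γ).2 (.inr huv)), .inr ⟨hk1, hconn,
      .inr (ncard_neighborSet_eq_two_of_isCycle hconn hc fun z hz ↦ ?_)⟩⟩
    have hz2 : ¬ 3 ≤ (T.neighborSet z).ncard := fun h ↦ hbranch ⟨z, hcp hz, h⟩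
    rw [ncard_neighborSet_sup_edge huv.ne hadj]
    rw [mem_endVertexSet] at hu hv
    grind

end Exchange

section Parent

/-- The predecessor of `x` when the connected graph `T` is rooted at `u`: a neighbour of `x` that is
closer to `u`. It is a junk value for `x = u`. -/
noncomputable def parent (T : SimpleGraph V) (u x : V) : V :=
  @Classical.epsilon V ⟨x⟩ fun y ↦ T.Adj x y ∧ T.dist y u + 1 = T.dist x u

/-- The children of `y` when `T` is rooted at `u`. The root is excluded because its parent is a junk
value. -/
def children (T : SimpleGraph V) (u y : V) : Set V := {x | x ≠ u ∧ parent T u x = y}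

lemma adj_parent_and_dist_parent (hT : T.Connected) (hx : x ≠ u) :
    T.Adj x (parent T u x) ∧ T.dist (parent T u x) u + 1 = T.dist x u := by
  refine Classical.epsilon_spec (p := fun y ↦ T.Adj x y ∧ T.dist y u + 1 = T.dist x u) ?_
  obtain ⟨p, hp⟩ := hT.exists_walk_length_eq_dist x u
  cases p with
  | nil => exact absurd rfl hx
  | @cons _ y _ h q =>
    have hq := dist_le q
    have htri := hT.dist_triangle (u := x) (v := y) (w := u)
    rw [dist_eq_one_iff_adj.2 h] at htri
    rw [Walk.length_cons] at hp
    exact ⟨y, h, by omega⟩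

lemma adj_parent (hT : T.Connected) (hx : x ≠ u) : T.Adj x (parent T u x) :=
  (adj_parent_and_dist_parent hT hx).1

lemma dist_parent_add_one (hT : T.Connected) (hx : x ≠ u) :
    T.dist (parent T u x) u + 1 = T.dist x u :=
  (adj_parent_and_dist_parent hT hx).2

lemma exists_isPath_mem_edges_parent (hT : T.Connected) (hx : x ≠ u) :
    ∃ p : T.Walk x u, p.IsPath ∧ s(x, parent T u x) ∈ p.edges := by
  obtain ⟨q, hq⟩ := hT.exists_walk_length_eq_dist (parent T u x) u
  refine ⟨Walk.cons (adj_parent hT hx) q, Walk.isPath_of_length_eq_dist _ ?_, by simp⟩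
  rw [Walk.length_cons, hq, dist_parent_add_one hT hx]

lemma parent_eq_of_adj (hT : T.Connected) (hxu : T.Adj x u) : parent T u x = u := by
  have hdist := dist_parent_add_one hT hxu.ne
  rw [dist_eq_one_iff_adj.2 hxu] at hdist
  exact hT.dist_eq_zero_iff.1 (by omega)

lemma children_subset_neighborSet (hT : T.Connected) : children T u y ⊆ T.neighborSet y := by
  rintro x ⟨hx, rfl⟩
  exact (adj_parent hT hx).symm

lemma ncard_children_lt_ncard_neighborSet [Finite V] (hT : T.Connected) (hy : y ≠ u) :
    (children T u y).ncard < (T.neighborSet y).ncard := by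
  refine Set.ncard_lt_ncard ((children_subset_neighborSet hT).ssubset_of_mem_notMem
    (adj_parent hT hy) fun ⟨hne, heq⟩ ↦ ?_)
  have hdist := dist_parent_add_one hT hne
  rw [heq, ← dist_parent_add_one hT hy] at hdist
  omega

lemma parent_eq_root_of_mem_endVertexSet [Finite V] (hT : T.Connected) (hx : x ≠ u)
    (hpx : parent T u x ∈ endVertexSet T) : parent T u x = u := by
  by_contra hne
  have hlt := ncard_children_lt_ncard_neighborSet hT hne
  rw [hpx, Nat.lt_one_iff, Set.ncard_eq_zero] at hlt
  exact hlt.subset (show x ∈ children T u _ from ⟨hx, rfl⟩)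

lemma injOn_parent [Finite V] (hT : T.Connected) (hu : u ∈ endVertexSet T) {s : Set V}
    (hs : u ∉ s)
    (hdeg : ∀ x ∈ s, parent T u x ≠ u → (T.neighborSet (parent T u x)).ncard = 2) :
    s.InjOn (parent T u) := by
  intro x hx x' hx' heq
  have hone : (children T u (parent T u x)).ncard ≤ 1 := by
    by_cases hroot : parent T u x = u
    · rw [hroot]
      exact (Set.ncard_le_ncard (children_subset_neighborSet hT)).trans_eq hu
    · have := ncard_children_lt_ncard_neighborSet hT hroot
      rw [hdeg x hx hroot] at this
      omega
  exact (Set.ncard_le_one (Set.toFinite _)).1 hone x ⟨ne_of_mem_of_not_mem hx hs, rfl⟩ x'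
    ⟨ne_of_mem_of_not_mem hx' hs, heq.symm⟩

lemma isTree_exchange_parent [Finite V] (hT : T.IsTree) (hx : x ≠ u) (hpx : parent T u x ≠ u) :
    (exchange T x u x (parent T u x)).IsTree := by
  obtain ⟨p, hp, hmem⟩ := exists_isPath_mem_edges_parent hT.connected hx
  exact isTree_exchange hT hx (fun h ↦ hpx (parent_eq_of_adj hT.connected h)) hp hmem

open Classical in
lemma ncard_neighborSet_exchange_parent [Finite V] (hT : T.Connected) (hx : x ≠ u)
    (hpx : parent T u x ≠ u) (z : V) :
    ((exchange T x u x (parent T u x)).neighborSet z).ncard +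
        (if z = parent T u x then 1 else 0) =
      (T.neighborSet z).ncard + if z = u then 1 else 0 := by
  have hxp := adj_parent hT hx
  have := ncard_neighborSet_exchange hx (fun h ↦ hpx (parent_eq_of_adj hT h)) hxp z
  grind [hxp.ne]

lemma endVertexSet_exchange_parent_subset [Finite V] (hT : T.Connected) (hx : x ≠ u)
    (hu : u ∈ endVertexSet T) (hpx : parent T u x ≠ u) :
    endVertexSet (exchange T x u x (parent T u x)) ⊆
      insert (parent T u x) (endVertexSet T \ {u}) := by
  intro z hz
  have := ncard_neighborSet_exchange_parent hT hx hpx z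
  simp only [mem_endVertexSet, Set.mem_insert_iff, Set.mem_sdiff,
    Set.mem_singleton_iff] at *
  grind

end Parent

section DegreeSum

variable [Finite V]

lemma ncard_neighborSet_parent_eq_two (hT : T.IsTree) (hle : T ≤ Γ)
    (hk : (endVertexSet T).ncard ≤ k + 1) (hno : ¬ HasKEndedFactor Γ k)
    (hu : u ∈ endVertexSet T) (hux : Γ.Adj u x) (hpx : parent T u x ≠ u) :
    (T.neighborSet (parent T u x)).ncard = 2 := by
  by_contra h2
  have hx := hux.ne'
  have hdeg := ncard_neighborSet_exchange_parent hT.connected hx hpx (parent T u x)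
  rw [if_pos rfl, if_neg hpx] at hdeg
  have hnotMem : parent T u x ∉ endVertexSet (exchange T x u x (parent T u x)) := fun h ↦ by
    rw [h] at hdeg
    exact h2 hdeg.symm
  have hsub := (Set.subset_insert_iff_of_notMem hnotMem).1
    (endVertexSet_exchange_parent_subset hT.connected hx hu hpx)
  have hcard := Set.ncard_le_ncard hsub
  rw [Set.ncard_sdiff_singleton_of_mem hu] at hcard
  exact hno ⟨_, exchange_le hle hux.symm,
    .inl ⟨isTree_exchange_parent hT hx hpx, by omega⟩⟩

lemma disjoint_neighborSet_image_parent (hT : T.IsTree) (hle : T ≤ Γ)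
    (hk : (endVertexSet T).ncard ≤ k + 1) (hno : ¬ HasKEndedFactor Γ k)
    (hu : u ∈ endVertexSet T) (hv : v ∈ endVertexSet T) (huv : u ≠ v) :
    Disjoint (Γ.neighborSet v) (parent T u '' Γ.neighborSet u) := by
  have hindep : ¬ Γ.Adj u v := fun h ↦ hno (hasKEndedFactor_of_adj_endVertices hT hle hk hu hv h)
  rw [Set.disjoint_right]
  rintro _ ⟨x, hux, rfl⟩ (hvp : Γ.Adj v (parent T u x))
  have hx : x ≠ u := (show Γ.Adj u x from hux).ne'
  have hpx : parent T u x ≠ u := fun h ↦ hindep (h ▸ hvp).symm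
  have hdeg := ncard_neighborSet_exchange_parent hT.connected hx hpx
  have hcard : (endVertexSet (exchange T x u x (parent T u x))).ncard ≤ k + 1 := by
    have hsub := endVertexSet_exchange_parent_subset hT.connected hx hu hpx
    have hsplit := Set.ncard_sdiff_singleton_add_one hu
    have := (Set.ncard_le_ncard hsub).trans (Set.ncard_insert_le _ _)
    omega
  refine hno (hasKEndedFactor_of_adj_endVertices (isTree_exchange_parent hT hx hpx)
    (exchange_le hle (Adj.symm hux)) hcard (u := v) (v := parent T u x) ?_ ?_ hvp)
  · have hdeg_v := hdeg v
    rw [if_neg hvp.ne, if_neg huv.symm] at hdeg_v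
    exact hdeg_v.trans hv
  · have hdeg_parent := hdeg (parent T u x)
    rw [if_pos rfl, if_neg hpx, ncard_neighborSet_parent_eq_two hT hle hk hno hu hux hpx]
      at hdeg_parent
    exact Nat.succ_injective hdeg_parent

theorem ncard_neighborSet_add_ncard_neighborSet_add_le_card (hT : T.IsTree) (hle : T ≤ Γ)
    (hk : (endVertexSet T).ncard = k + 1) (hno : ¬ HasKEndedFactor Γ k)
    (hu : u ∈ endVertexSet T) (hv : v ∈ endVertexSet T) (huv : u ≠ v) :
    (Γ.neighborSet u).ncard + (Γ.neighborSet v).ncard + k ≤ Nat.card V := by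
  have hinj : (Γ.neighborSet u).InjOn (parent T u) :=
    injOn_parent hT.connected hu Γ.notMem_neighborSet_self fun x hux hpx ↦
      ncard_neighborSet_parent_eq_two hT hle hk.le hno hu hux hpx
  have hdisj := disjoint_neighborSet_image_parent hT hle hk.le hno hu hv huv
  have hsub : Γ.neighborSet v ∪ parent T u '' Γ.neighborSet u ⊆ (endVertexSet T \ {u})ᶜ := by
    rintro z (hvz | ⟨x, hux, rfl⟩) ⟨hz, hzu⟩
    · exact hno (hasKEndedFactor_of_adj_endVertices hT hle hk.le hv hz hvz)
    · exact hzu (parent_eq_root_of_mem_endVertexSet hT.connected (Adj.ne' hux) hz)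
  have hcard := Set.ncard_le_ncard hsub
  rw [Set.ncard_union_eq hdisj, hinj.ncard_image] at hcard
  have hcompl := Set.ncard_add_ncard_compl (endVertexSet T \ {u})
  rw [Set.ncard_sdiff_singleton_of_mem hu, hk] at hcompl
  omega

end DegreeSum

section Subgraph

variable {G : SimpleGraph V} {H : G.Subgraph}

lemma ncard_neighborSet_coe (H : G.Subgraph) (w : H.verts) :
    (H.coe.neighborSet w).ncard = (H.neighborSet w).ncard :=
  Nat.card_congr (H.coeNeighborSetEquiv w)

lemma ncard_endVertexSet_coe (H : G.Subgraph) :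
    (endVertexSet H.coe).ncard = endVertexCount H := by
  rw [endVertexCount, ← Set.ncard_image_of_injective _ Subtype.val_injective]
  congr 1
  ext b
  simp only [mem_endVertexSet, ncard_neighborSet_coe, Set.mem_image, Set.mem_ofPred_eq,
    Subtype.exists, exists_and_right, exists_eq_right, exists_prop]

lemma isKEndedTree_iff_isKEnded_coe : IsKEndedTree G k H ↔ IsKEnded H.coe k := by
  simp only [IsKEndedTree, IsKEnded, IsCycleSubgraph, IsCycleGraph, ncard_endVertexSet_coe,
    ncard_neighborSet_coe, Subgraph.connected_iff', Subtype.forall, Nat.card_coe_set_eq]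

lemma isTree_and_ncard_endVertexSet_eq (hk : 1 ≤ k) (hH : IsKEndedTree G (k + 1) H)
    (hnot : ¬ IsKEndedTree G k H) : H.coe.IsTree ∧ (endVertexSet H.coe).ncard = k + 1 := by
  obtain ⟨htree, hends⟩ := hH.resolve_right fun hcycle ↦ hnot (.inr ⟨hk, hcycle.2⟩)
  rw [ncard_endVertexSet_coe]
  exact ⟨htree, hends.antisymm (not_le.1 fun hle ↦ hnot (.inl ⟨htree, hle⟩))⟩

lemma isKEnded_of_iso {T' : SimpleGraph W} (f : T ≃g T') (hT : IsKEnded T k) :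
    IsKEnded T' k := by
  have hdeg : ∀ w, (T.neighborSet w).ncard = (T'.neighborSet (f w)).ncard := fun w ↦
    Nat.card_congr (f.mapNeighborSet w)
  have hends : (endVertexSet T).ncard = (endVertexSet T').ncard :=
    Nat.card_congr (f.toEquiv.subtypeEquiv fun w ↦ by
      rw [mem_endVertexSet, mem_endVertexSet, hdeg w]
      rfl)
  rw [IsKEnded, IsCycleGraph, hends, f.isTree_iff, f.connected_iff,
    Nat.card_congr f.toEquiv] at hT
  refine hT.imp_right (And.imp_right (And.imp_right (Or.imp_right fun h w ↦ ?_)))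
  rw [← f.apply_symm_apply w, ← hdeg, h]

lemma verts_sup_subgraphOfAdj (hu : u ∈ H.verts) (hux : G.Adj u x) :
    (H ⊔ G.subgraphOfAdj hux).verts = insert x H.verts := by
  rw [Subgraph.verts_sup, subgraphOfAdj_verts, Set.union_insert, Set.union_singleton,
    Set.insert_eq_of_mem (Set.mem_insert_of_mem x hu)]

lemma card_edgeSet_coe (H : G.Subgraph) : Nat.card H.coe.edgeSet = H.edgeSet.ncard := by
  rw [Nat.card_coe_set_eq, ← Subgraph.image_coe_edgeSet_coe,
    Set.ncard_image_of_injective _ (Sym2.map.injective Subtype.val_injective)]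

variable [Finite V]

lemma bddAbove_ncard_isKEndedTree (G : SimpleGraph V) (k : ℕ) :
    BddAbove {n | ∃ H : G.Subgraph, IsKEndedTree G k H ∧ H.verts.ncard = n} :=
  ⟨Nat.card V, by rintro _ ⟨H, -, rfl⟩; exact Set.ncard_le_card _⟩

lemma ncard_le_maxKEndedOrder (hH : IsKEndedTree G k H) : H.verts.ncard ≤ maxKEndedOrder G k :=
  le_csSup (bddAbove_ncard_isKEndedTree G k) ⟨H, hH, rfl⟩

lemma exists_isKEndedTree_ncard_eq_maxKEndedOrder (hpos : 0 < maxKEndedOrder G k) :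
    ∃ H : G.Subgraph, IsKEndedTree G k H ∧ H.verts.ncard = maxKEndedOrder G k := by
  refine Nat.sSup_mem (Set.nonempty_iff_ne_empty.2 fun hempty ↦ ?_)
    (bddAbove_ncard_isKEndedTree G k)
  simp [maxKEndedOrder, hempty] at hpos

lemma card_le_maxKEndedOrder_of_copy {T : SimpleGraph W} (f : Copy T G) (hT : IsKEnded T k) :
    Nat.card W ≤ maxKEndedOrder G k := by
  rw [Nat.card_congr f.isoToSubgraph.toEquiv]
  exact ncard_le_maxKEndedOrder
    (isKEndedTree_iff_isKEnded_coe.2 (isKEnded_of_iso f.isoToSubgraph hT))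

lemma ncard_le_maxKEndedOrder_of_hasKEndedFactor_induce {S : Set V}
    (h : HasKEndedFactor (G.induce S) k) : S.ncard ≤ maxKEndedOrder G k := by
  obtain ⟨T, hle, hT⟩ := h
  exact card_le_maxKEndedOrder_of_copy ((Copy.induce G S).comp (.ofLE _ _ hle)) hT

open Classical in
lemma ncard_neighborSet_sup_subgraphOfAdj (hux : G.Adj u x) (hadj : ¬ H.Adj u x) (z : V) :
    ((H ⊔ G.subgraphOfAdj hux).neighborSet z).ncard =
      (H.neighborSet z).ncard + if z = u ∨ z = x then 1 else 0 := by
  have hcoe : (H ⊔ G.subgraphOfAdj hux).spanningCoe = H.spanningCoe ⊔ edge u x := by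
    ext a b
    simp only [Subgraph.spanningCoe_adj, Subgraph.sup_adj, subgraphOfAdj_adj, sup_adj, edge_adj,
      Sym2.eq_iff]
    grind [hux.ne]
  have hdeg := ncard_neighborSet_sup_edge (T := H.spanningCoe) hux.ne hadj z
  rwa [← hcoe] at hdeg

lemma isTree_coe_sup_subgraphOfAdj (hH : H.coe.IsTree) (hu : u ∈ H.verts) (hx : x ∉ H.verts)
    (hux : G.Adj u x) : (H ⊔ G.subgraphOfAdj hux).coe.IsTree := by
  obtain ⟨hconn, hcard⟩ := isTree_iff_connected_and_card.1 hH
  refine isTree_iff_connected_and_card.2 ⟨?_, ?_⟩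
  · exact (Subgraph.connected_sup ⟨hconn.preconnected⟩
      (Subgraph.subgraphOfAdj_connected hux).preconnected ⟨u, hu, by simp⟩).coe
  · have hnotMem : s(u, x) ∉ H.edgeSet := fun h ↦ hx (H.edge_vert (Subgraph.mem_edgeSet.1 h).symm)
    rw [card_edgeSet_coe, Nat.card_coe_set_eq] at hcard ⊢
    rw [Subgraph.edgeSet_sup, edgeSet_subgraphOfAdj, Set.union_singleton,
      Set.ncard_insert_of_notMem hnotMem, verts_sup_subgraphOfAdj hu,
      Set.ncard_insert_of_notMem hx, hcard]

lemma endVertexCount_sup_subgraphOfAdj_le (hu : u ∈ H.verts) (hu1 : (H.neighborSet u).ncard = 1)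
    (hx : x ∉ H.verts) (hux : G.Adj u x) :
    endVertexCount (H ⊔ G.subgraphOfAdj hux) ≤ endVertexCount H := by
  have hsub : {z | z ∈ (H ⊔ G.subgraphOfAdj hux).verts ∧
      ((H ⊔ G.subgraphOfAdj hux).neighborSet z).ncard = 1} ⊆
      insert x ({z | z ∈ H.verts ∧ (H.neighborSet z).ncard = 1} \ {u}) := by
    rintro z ⟨hz, hz1⟩
    rw [verts_sup_subgraphOfAdj hu] at hz
    rw [ncard_neighborSet_sup_subgraphOfAdj hux fun h ↦ hx (H.edge_vert h.symm)] at hz1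
    simp only [Set.mem_insert_iff, Set.mem_sdiff, Set.mem_ofPred_eq, Set.mem_singleton_iff] at *
    grind
  calc endVertexCount (H ⊔ G.subgraphOfAdj hux)
    _ ≤ _ := (Set.ncard_le_ncard hsub).trans (Set.ncard_insert_le _ _)
    _ = endVertexCount H := Set.ncard_sdiff_singleton_add_one ⟨hu, hu1⟩

lemma mem_verts_of_adj_endVertex (hH : H.coe.IsTree) (hends : endVertexCount H ≤ k)
    (hmax : H.verts.ncard = maxKEndedOrder G k) {u : H.verts} (hu : u ∈ endVertexSet H.coe)
    (hux : G.Adj u x) : x ∈ H.verts := by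
  by_contra hx
  have hu1 : (H.neighborSet u).ncard = 1 := (ncard_neighborSet_coe H u).symm.trans hu
  have hle := ncard_le_maxKEndedOrder (.inl ⟨isTree_coe_sup_subgraphOfAdj hH u.2 hx hux,
    (endVertexCount_sup_subgraphOfAdj_le u.2 hu1 hx hux).trans hends⟩)
  rw [verts_sup_subgraphOfAdj u.2, Set.ncard_insert_of_notMem hx] at hle
  omega

end Subgraph

section Degree

lemma ncard_neighborSet_induce_eq_degree (G : SimpleGraph V) {S : Set V} (u : S)
    [Fintype (G.neighborSet u)] (hS : ∀ x, G.Adj u x → x ∈ S) :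
    ((G.induce S).neighborSet u).ncard = G.degree u := by
  rw [← G.card_neighborFinset_eq_degree, ← Set.ncard_coe_finset, G.coe_neighborFinset,
    ← Set.ncard_image_of_injective _ Subtype.val_injective]
  congr 1
  ext x
  simpa using hS x

lemma minDegreeSum_two_le [Fintype V] (G : SimpleGraph V) [DecidableRel G.Adj] (huv : u ≠ v)
    (hadj : ¬ G.Adj u v) : minDegreeSum G 2 ≤ (G.degree u + G.degree v : ℕ) := by
  classical
  have hind : IsIndSet G (({u, v} : Finset V) : Set V) := by
    simp only [IsIndSet, Finset.coe_pair, Set.mem_insert_iff, Set.mem_singleton_iff]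
    grind [G.adj_comm u v, G.irrefl (v := u), G.irrefl (v := v)]
  refine (iInf₂_le ({u, v} : Finset V) ⟨Finset.card_pair huv, hind⟩).trans_eq ?_
  rw [Finset.sum_pair huv, Nat.cast_add]

end Degree

theorem corollary6_general [Fintype V] (G : SimpleGraph V) [DecidableRel G.Adj] (k : ℕ)
    (hk : 1 ≤ k) (h : (maxKEndedOrder G (k + 1) : ℕ∞) + 1 ≤ minDegreeSum G 2 + (k : ℕ∞)) :
    maxKEndedOrder G k ≥ maxKEndedOrder G (k + 1) := by
  by_contra! hlt
  obtain ⟨H, hH, hmax⟩ := exists_isKEndedTree_ncard_eq_maxKEndedOrder (Nat.zero_lt_of_lt hlt)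
  have hnotEnded : ¬ IsKEndedTree G k H := fun hended ↦
    (hmax ▸ ncard_le_maxKEndedOrder hended).not_gt hlt
  have hno : ¬ HasKEndedFactor (G.induce H.verts) k := fun hfactor ↦
    (hmax ▸ ncard_le_maxKEndedOrder_of_hasKEndedFactor_induce hfactor).not_gt hlt
  obtain ⟨htree, hends⟩ := isTree_and_ncard_endVertexSet_eq hk hH hnotEnded
  have hle : H.coe ≤ G.induce H.verts := fun _ _ ↦ H.adj_sub
  obtain ⟨u, hu, v, hv, huv⟩ := (Set.one_lt_ncard).1 (by omega : 1 < (endVertexSet H.coe).ncard)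
  have hadj : ¬ G.Adj u v := fun hGuv ↦
    hno (hasKEndedFactor_of_adj_endVertices htree hle hends.le hu hv hGuv)
  have hupper := ncard_neighborSet_add_ncard_neighborSet_add_le_card htree hle hends hno hu hv huv
  have hdegree {w : H.verts} (hw : w ∈ endVertexSet H.coe) :=
    ncard_neighborSet_induce_eq_degree G w fun _ ↦ mem_verts_of_adj_endVertex htree
      (ncard_endVertexSet_coe H ▸ hends.le) hmax hw
  rw [hdegree hu, hdegree hv, Nat.card_coe_set_eq, hmax] at hupper
  have hlower : maxKEndedOrder G (k + 1) + 1 ≤ G.degree u + G.degree v + k := mod_cast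
    h.trans (add_le_add_left (minDegreeSum_two_le G (Subtype.coe_ne_coe.2 huv) hadj) _)
  omega

/-- **Corollary 6.** If `G` is connected and `σ_2 ≥ t_{k+1} - k + 1` for some
positive integer `k`, then `t_k ≥ t_{k+1}`. -/
theorem corollary6 [Fintype V] (G : SimpleGraph V) [DecidableRel G.Adj]
    (hG : G.Connected) (k : ℕ) (hk : 1 ≤ k)
    (h : (maxKEndedOrder G (k + 1) : ℕ∞) + 1 ≤ minDegreeSum G 2 + (k : ℕ∞)) :
    maxKEndedOrder G k ≥ maxKEndedOrder G (k + 1) :=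
  corollary6_general G k hk h
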